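/- arXiv:math/0412354 — 2 statements merged into one kernel-verified Lean document; each statement's English description precedes it below -/
import Mathlib

section
/- The Dirichlet beta function β, i.e., the entire L-function of the unique nonprincipal Dirichlet character modulo 4 (agreeing with ∑_{n=0}^∞ (−1)ⁿ (2n+1)^{−s} for Re(s) > 1), is differentially transcendental: there do not exist n ∈ ℕ and a nonzero polynomial P ∈ ℂ[X₀, X₁, …, X_{n+1}] such that P(s, β(s), β′(s), …, β⁽ⁿ⁾(s)) = 0 for all s ∈ ℂ. -/
/-!
By unique factorization a Dirichlet series is a power series in independent variables `p ^ (-s)`,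
`p` prime, so its coefficient ring carries the commuting derivations `∂ / ∂ (p ^ (-s))`. The `j`-th
derivative of `∑ f n * n ^ (-s)` has coefficients `(-log n) ^ j * f n`; hence the constant term of
the Jacobian of the first `k` derivatives with respect to `p₁, …, p_k` is the determinant of
`f (pᵢ) * (-log pᵢ) ^ j`, essentially a Vandermonde determinant. It is nonzero as soon as `f` is
nonzero at `k` distinct primes `pᵢ`, and the Jacobian criterion then shows that the coefficient
sequences of the derivatives are algebraically independent for Dirichlet convolution.

Powers of `s` in a differential equation are separated from Dirichlet series by growth as
`s → +∞`: in `∑ s ^ k * F_k s` the least `n` occurring in some `F_k`, taken with the largest `k` for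
which it occurs, gives a term `s ^ k * n ^ (-s)` that dominates all others.
-/

open Filter Topology MvPolynomial LSeries

section JacobianCriterion

variable {σ R A M : Type*}

theorem totalDegree_pderiv_lt [CommSemiring R] {f : MvPolynomial σ R} (hf : f.totalDegree ≠ 0)
    (i : σ) : (pderiv i f).totalDegree < f.totalDegree := by
  refine (Finset.sup_lt_iff (Nat.pos_of_ne_zero hf)).2 fun d hd ↦ ?_
  rw [mem_support_iff, coeff_pderiv] at hd
  have hle := le_totalDegree (mem_support_iff.2 (left_ne_zero_of_mul hd))
  have hdeg : (d + Finsupp.single i 1).degree = d.degree + 1 := by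
    rw [map_add, Finsupp.degree_single]
  exact Nat.lt_of_succ_le (hdeg.symm.trans_le hle)

theorem eq_C_of_forall_pderiv_eq_zero [CommSemiring R] [NoZeroDivisors R] [CharZero R]
    {f : MvPolynomial σ R} (hf : ∀ i, pderiv i f = 0) : f = C (f.coeff 0) := by
  classical
  ext d
  rw [coeff_C]
  split_ifs with hd
  · rw [hd]
  · obtain ⟨i, hi⟩ := Finsupp.ne_iff.1 (Ne.symm hd)
    have hcoeff := congrArg (coeff (d - Finsupp.single i 1)) (hf i)
    rw [coeff_pderiv, Finsupp.sub_add_single_one_cancel hi, coeff_zero] at hcoeff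
    exact (mul_eq_zero.1 hcoeff).resolve_right (Nat.cast_add_one_ne_zero _)

theorem induction_on_pderiv [CommSemiring R] {motive : MvPolynomial σ R → Prop}
    (C : ∀ a, motive (C a)) (pderiv : ∀ f, (∀ i, motive (pderiv i f)) → motive f)
    (f : MvPolynomial σ R) : motive f := by
  induction hn : f.totalDegree using Nat.strong_induction_on generalizing f with
  | _ n ih =>
    subst hn
    by_cases hf : f.totalDegree = 0
    · exact totalDegree_eq_zero_iff_eq_C.1 hf ▸ C _
    · exact pderiv f fun i ↦ ih _ (totalDegree_pderiv_lt hf i) _ rfl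

theorem derivation_aeval [Fintype σ] [CommSemiring R] [CommSemiring A] [Algebra R A]
    [AddCommMonoid M] [Module A M] [Module R M]
    (D : Derivation R A M) (b : σ → A) (f : MvPolynomial σ R) :
    D (aeval b f) = ∑ j, aeval b (pderiv j f) • D (b j) := by
  classical
  induction f using MvPolynomial.induction_on with
  | C a => simp
  | add f g hf hg => simp only [map_add, hf, hg, add_smul, Finset.sum_add_distrib]
  | mul_X f i hf =>
    simp [hf, pderiv_X, Pi.single_apply, add_smul, mul_smul, Finset.sum_add_distrib,
      Finset.smul_sum, apply_ite (aeval b)]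

/-- The Jacobian criterion: differentiating an algebraic relation of least degree among the `b j`
gives a linear system for its partial derivatives, which are relations of smaller degree. -/
theorem algebraicIndependent_of_det_derivation_mem_nonZeroDivisors [Fintype σ] [DecidableEq σ]
    [CommRing R] [NoZeroDivisors R] [CharZero R] [CommRing A] [Algebra R A] [FaithfulSMul R A]
    {D : σ → Derivation R A A} {b : σ → A}
    (hdet : (Matrix.of fun i j ↦ D i (b j)).det ∈ nonZeroDivisors A) :
    AlgebraicIndependent R b := by
  rw [algebraicIndependent_iff]
  intro f
  induction f using induction_on_pderiv with
  | C a => simp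
  | pderiv f ih =>
    intro hf
    have hsystem : (Matrix.of fun i j ↦ D i (b j)).mulVec (fun j ↦ aeval b (pderiv j f)) = 0 := by
      ext i
      have hDi := derivation_aeval (D i) b f
      rw [hf, map_zero] at hDi
      simpa [Matrix.mulVec, dotProduct, mul_comm] using hDi.symm
    have hzero := Matrix.eq_zero_of_det_mem_nonZeroDivisors_of_mulVec_eq_zero hdet hsystem
    have hfC := eq_C_of_forall_pderiv_eq_zero fun j ↦ ih j (congrFun hzero j)
    rw [hfC] at hf ⊢
    simpa using hf

end JacobianCriterion

section DirichletCoefficients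

variable {R : Type*} [CommSemiring R]

theorem sum_divisorsAntidiagonal_mul_left {M : Type*} [AddCommMonoid M] {p : ℕ} (hp : p ≠ 0)
    (n : ℕ) {F : ℕ × ℕ → M} (hF : ∀ x, ¬ p ∣ x.1 → F x = 0) :
    ∑ x ∈ (p * n).divisorsAntidiagonal, F x =
      ∑ x ∈ n.divisorsAntidiagonal, F (p * x.1, x.2) := by
  symm
  refine Finset.sum_of_injOn (fun x ↦ (p * x.1, x.2)) ?_ ?_ ?_ fun _ _ ↦ rfl
  · rintro ⟨a, b⟩ _ ⟨c, d⟩ _ h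
    simpa [hp] using h
  · rintro ⟨a, b⟩ h
    simp_all [mul_assoc]
  · rintro ⟨a, b⟩ h hnot
    refine hF _ ?_
    rintro ⟨c, rfl⟩
    refine hnot ⟨(c, b), ?_, rfl⟩
    simp_all [mul_assoc]

/-- The substitution `n ↦ p * n` in an arithmetic function. On Dirichlet series supported on
multiples of `p` it is multiplication by `p ^ s`. -/
def dilation (p : ℕ) : ArithmeticFunction R →ₗ[R] ArithmeticFunction R where
  toFun f := ⟨fun n ↦ f (p * n), by rw [mul_zero, ArithmeticFunction.map_zero]⟩
  map_add' _ _ := rfl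
  map_smul' _ _ := rfl

theorem dilation_apply (p : ℕ) (f : ArithmeticFunction R) (n : ℕ) :
    dilation p f n = f (p * n) := rfl

theorem dilation_mul {p : ℕ} {f : ArithmeticFunction R} (hf : ∀ n, ¬ p ∣ n → f n = 0)
    (g : ArithmeticFunction R) : dilation p (f * g) = dilation p f * g := by
  ext n
  simp only [ArithmeticFunction.mul_apply, dilation_apply]
  rcases eq_or_ne p 0 with rfl | hp
  · simp
  · exact sum_divisorsAntidiagonal_mul_left hp n fun x hx ↦ by rw [hf _ hx, zero_mul]

/-- Pointwise multiplication by the `p`-adic valuation, encoded by `Nat.factorization`. -/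
def valuationMul (p : ℕ) : ArithmeticFunction R →ₗ[R] ArithmeticFunction R where
  toFun f := ⟨fun n ↦ n.factorization p * f n, by simp⟩
  map_add' _ _ := ArithmeticFunction.ext fun _ ↦ mul_add _ _ _
  map_smul' _ _ := ArithmeticFunction.ext fun _ ↦ mul_left_comm _ _ _

theorem valuationMul_apply (p : ℕ) (f : ArithmeticFunction R) (n : ℕ) :
    valuationMul p f n = n.factorization p * f n := rfl

theorem valuationMul_eq_zero_of_not_dvd {p n : ℕ} (hn : ¬ p ∣ n) (f : ArithmeticFunction R) :
    valuationMul p f n = 0 := by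
  rw [valuationMul_apply, Nat.factorization_eq_zero_of_not_dvd hn, Nat.cast_zero, zero_mul]

theorem valuationMul_mul (p : ℕ) (f g : ArithmeticFunction R) :
    valuationMul p (f * g) = valuationMul p f * g + f * valuationMul p g := by
  ext n
  simp only [valuationMul_apply, ArithmeticFunction.add_apply, ArithmeticFunction.mul_apply,
    Finset.mul_sum, ← Finset.sum_add_distrib]
  refine Finset.sum_congr rfl fun x hx ↦ ?_
  obtain ⟨h₁, h₂⟩ := Nat.ne_zero_of_mem_divisorsAntidiagonal hx
  rw [← (Nat.mem_divisorsAntidiagonal.1 hx).1, Nat.factorization_mul h₁ h₂, Finsupp.add_apply]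
  push_cast
  ring

end DirichletCoefficients

section PrimeDerivation

variable {R : Type*} [CommRing R]

/-- Formal differentiation with respect to the variable `p ^ (-s)` of a Dirichlet series, viewed as
a power series in the independent variables `q ^ (-s)`, `q` prime. -/
def primeDerivation (p : ℕ) : Derivation R (ArithmeticFunction R) (ArithmeticFunction R) :=
  Derivation.mk' (dilation p ∘ₗ valuationMul p) fun f g ↦ by
    have leibniz_left (f g : ArithmeticFunction R) :
        dilation p (valuationMul p f * g) = dilation p (valuationMul p f) * g :=
      dilation_mul (fun _ hn ↦ valuationMul_eq_zero_of_not_dvd hn f) g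
    rw [LinearMap.comp_apply, valuationMul_mul, map_add, leibniz_left, mul_comm f, leibniz_left,
      LinearMap.comp_apply, LinearMap.comp_apply, smul_eq_mul, smul_eq_mul, add_comm, mul_comm f,
      mul_comm g]

theorem primeDerivation_apply_one {p : ℕ} (hp : p.Prime) (f : ArithmeticFunction R) :
    primeDerivation p f 1 = f p := by
  change ((p * 1).factorization p : R) * f (p * 1) = f p
  rw [mul_one, hp.factorization_self, Nat.cast_one, one_mul]

/-- The constant coefficient of a Dirichlet series, as a ring homomorphism. -/
def evalOne : ArithmeticFunction R →+* R where
  toFun f := f 1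
  map_one' := ArithmeticFunction.one_one
  map_mul' _ _ := ArithmeticFunction.mul_apply_one
  map_zero' := rfl
  map_add' _ _ := rfl

theorem evalOne_apply (f : ArithmeticFunction R) : evalOne f = f 1 := rfl

theorem algebraicIndependent_of_det_apply_prime_isUnit {ι : Type*} [Fintype ι] [DecidableEq ι]
    [NoZeroDivisors R] [CharZero R] {b : ι → ArithmeticFunction R} {p : ι → ℕ}
    (hp : ∀ i, (p i).Prime) (hdet : IsUnit (Matrix.of fun i j ↦ b j (p i)).det) :
    AlgebraicIndependent R b := by
  have : FaithfulSMul R (ArithmeticFunction R) :=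
    (faithfulSMul_iff_algebraMap_injective _ _).2 fun x y hxy ↦ by
      simpa [evalOne_apply] using congrArg evalOne hxy
  refine algebraicIndependent_of_det_derivation_mem_nonZeroDivisors
    (D := fun i ↦ primeDerivation (p i)) (IsUnit.mem_nonZeroDivisors ?_)
  rw [ArithmeticFunction.isUnit_iff_isUnit_apply_one, ← evalOne_apply, RingHom.map_det]
  convert hdet using 2
  ext i j
  exact primeDerivation_apply_one (hp i) (b j)

end PrimeDerivation

section LSeries

theorem tendsto_pow_mul_cpow_mul_LSeries_atTop_zero {f : ℕ → ℂ} {n : ℕ}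
    (hf : ∀ m ≤ n + 1, f m = 0) (habs : abscissaOfAbsConv f < ⊤) (k : ℕ) :
    Tendsto (fun x : ℝ ↦ (x : ℂ) ^ k * ((n + 1) ^ (x : ℂ) * LSeries f x)) atTop (𝓝 0) := by
  set r : ℝ := (n + 1) / (n + 2) with hr
  have hr0 : 0 < r := by positivity
  have hr1 : r < 1 := by rw [hr, div_lt_one (by positivity)]; linarith
  have hdecay : Tendsto (fun x : ℝ ↦ x ^ k * r ^ x) atTop (𝓝 0) := by
    have hlog : 0 < -Real.log r := neg_pos.2 (Real.log_neg hr0 hr1)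
    refine (isLittleO_pow_exp_pos_mul_atTop k hlog).tendsto_div_nhds_zero.congr fun x ↦ ?_
    rw [Real.rpow_def_of_pos hr0, neg_mul, Real.exp_neg, div_inv_eq_mul]
  have hlead := LSeries.tendsto_cpow_mul_atTop hf habs
  have hprod := ((Complex.continuous_ofReal.tendsto 0).comp hdecay).mul hlead
  rw [Complex.ofReal_zero, zero_mul] at hprod
  refine hprod.congr fun x ↦ ?_
  have hpow : r ^ x * (n + 2 : ℝ) ^ x = (n + 1 : ℝ) ^ x := by
    rw [← Real.mul_rpow hr0.le (by positivity), hr, div_mul_cancel₀ _ (by positivity)]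
  have hcpow : ((r ^ x : ℝ) : ℂ) * (n + 2) ^ (x : ℂ) = (n + 1) ^ (x : ℂ) := by
    have := congrArg Complex.ofReal hpow
    rw [Complex.ofReal_mul, Complex.ofReal_cpow (by positivity : (0 : ℝ) ≤ n + 2),
      Complex.ofReal_cpow (by positivity : (0 : ℝ) ≤ n + 1)] at this
    exact_mod_cast this
  rw [← hcpow, Function.comp_apply, Complex.ofReal_mul, Complex.ofReal_pow]
  push_cast
  ring_nf

theorem tendsto_pow_div_pow_atTop_zero_ofReal {k d : ℕ} (hkd : k < d) :
    Tendsto (fun x : ℝ ↦ (x : ℂ) ^ k / (x : ℂ) ^ d) atTop (𝓝 0) := by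
  simpa [Function.comp_def] using (Complex.continuous_ofReal.tendsto 0).comp
    (tendsto_pow_div_pow_atTop_zero (𝕜 := ℝ) hkd)

theorem tendsto_sum_pow_mul_LSeries_atTop {f : ℕ → ℕ → ℂ} {S : Finset ℕ}
    (habs : ∀ k ∈ S, abscissaOfAbsConv (f k) < ⊤) {n d : ℕ} (hd : d ∈ S)
    (hn : ∀ k ∈ S, ∀ m ≤ n, f k m = 0) (hgt : ∀ k ∈ S, d < k → f k (n + 1) = 0) :
    Tendsto (fun x : ℝ ↦ (n + 1) ^ (x : ℂ) / (x : ℂ) ^ d * ∑ k ∈ S, (x : ℂ) ^ k * LSeries (f k) x)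
      atTop (𝓝 (f d (n + 1))) := by
  have hterm (k : ℕ) (hk : k ∈ S) : Tendsto
      (fun x : ℝ ↦ (n + 1) ^ (x : ℂ) / (x : ℂ) ^ d * ((x : ℂ) ^ k * LSeries (f k) x)) atTop
      (𝓝 (if k = d then f d (n + 1) else 0)) := by
    have hlead := LSeries.tendsto_cpow_mul_atTop (hn k hk) (habs k hk)
    rcases lt_trichotomy k d with hkd | rfl | hdk
    · rw [if_neg hkd.ne]
      have hprod := (tendsto_pow_div_pow_atTop_zero_ofReal hkd).mul hlead
      rw [zero_mul] at hprod
      exact hprod.congr fun x ↦ by ring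
    · rw [if_pos rfl]
      refine hlead.congr' ?_
      filter_upwards [eventually_ne_atTop 0] with x hx
      field_simp [Complex.ofReal_ne_zero.2 hx]
    · rw [if_neg hdk.ne']
      have hvanish (m : ℕ) (hm : m ≤ n + 1) : f k m = 0 :=
        (Nat.le_succ_iff.1 hm).elim (hn k hk m) fun h ↦ h ▸ hgt k hk hdk
      refine (tendsto_pow_mul_cpow_mul_LSeries_atTop_zero hvanish (habs k hk) (k - d)).congr' ?_
      filter_upwards [eventually_ne_atTop 0] with x hx
      rw [pow_sub₀ _ (Complex.ofReal_ne_zero.2 hx) hdk.le]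
      ring
  simpa [Finset.mul_sum, hd] using tendsto_finsetSum S hterm

theorem eq_zero_of_eventually_sum_pow_mul_LSeries_eq_zero {f : ℕ → ArithmeticFunction ℂ}
    {S : Finset ℕ} (habs : ∀ k ∈ S, abscissaOfAbsConv (f k) < ⊤)
    (hzero : ∀ᶠ x : ℝ in atTop, ∑ k ∈ S, (x : ℂ) ^ k * LSeries (f k) x = 0) :
    ∀ k ∈ S, f k = 0 := by
  suffices ∀ m, ∀ k ∈ S, f k m = 0 from fun k hk ↦ ArithmeticFunction.ext fun m ↦ this m k hk
  intro m
  induction m using Nat.strong_induction_on with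
  | _ m ih =>
    rcases m with _ | n
    · simp
    by_contra! hne
    obtain ⟨k₀, hk₀, hfk₀⟩ := hne
    obtain ⟨d, hd, hmax⟩ := (S.filter fun k ↦ f k (n + 1) ≠ 0).exists_max_image id
      ⟨k₀, Finset.mem_filter.2 ⟨hk₀, hfk₀⟩⟩
    obtain ⟨hdS, hfd⟩ := Finset.mem_filter.1 hd
    have hgt (k : ℕ) (hk : k ∈ S) (hdk : d < k) : f k (n + 1) = 0 := by
      by_contra hfk
      exact hdk.not_ge (hmax k (Finset.mem_filter.2 ⟨hk, hfk⟩))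
    have hlim := tendsto_sum_pow_mul_LSeries_atTop (f := fun k ↦ f k) habs hdS
      (fun k hk m hm ↦ ih m (Nat.lt_succ_of_le hm) k hk) hgt
    refine hfd (tendsto_nhds_unique hlim (tendsto_const_nhds.congr' ?_))
    filter_upwards [hzero] with x hx
    rw [hx, mul_zero]

theorem LSeriesHasSum_one_arithmeticFunction (s : ℂ) :
    LSeriesHasSum (1 : ArithmeticFunction ℂ) s 1 := by
  have hdelta : ⇑(1 : ArithmeticFunction ℂ) = delta := ArithmeticFunction.one_eq_delta
  have hterm : term delta s = fun n ↦ if n = 1 then 1 else 0 := funext (term_delta s)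
  rw [hdelta, LSeriesHasSum, hterm]
  exact hasSum_ite_eq 1 1

theorem LSeriesHasSum_aeval {σ : Type*} {b : σ → ArithmeticFunction ℂ} {s : ℂ} {v : σ → ℂ}
    (hb : ∀ j, LSeriesHasSum (b j) s (v j)) (P : MvPolynomial σ ℂ) :
    LSeriesHasSum (aeval b P) s (eval v P) := by
  induction P using MvPolynomial.induction_on with
  | C a =>
    rw [aeval_C, eval_C, Algebra.algebraMap_eq_smul_one]
    simpa only [mul_one] using! (LSeriesHasSum_one_arithmeticFunction s).smul a
  | add P Q hP hQ => simpa only [map_add] using! hP.add hQ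
  | mul_X P i hP =>
    simpa only [map_mul, aeval_X, eval_X] using ArithmeticFunction.LSeriesHasSum_mul hP (hb i)

/-- The coefficients of the `j`-th derivative of the Dirichlet series with coefficients `f`. The
value at `0`, which is irrelevant to the Dirichlet series, is set to `0`. -/
noncomputable def iteratedDerivCoeff (f : ℕ → ℂ) (j : ℕ) : ArithmeticFunction ℂ :=
  toArithmeticFunction fun n ↦ (-Complex.log n) ^ j * f n

theorem iteratedDerivCoeff_apply (f : ℕ → ℂ) (j : ℕ) {n : ℕ} (hn : n ≠ 0) :
    iteratedDerivCoeff f j n = (-Complex.log n) ^ j * f n :=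
  if_neg hn

theorem iterate_logMul_apply (f : ℕ → ℂ) (j n : ℕ) :
    (logMul^[j] f) n = Complex.log n ^ j * f n := by
  induction j with
  | zero => simp
  | succ j ih => rw [Function.iterate_succ_apply', logMul, ih, pow_succ', mul_assoc]

theorem LSeriesHasSum_iteratedDerivCoeff {f : ℕ → ℂ} {s : ℂ} (hs : abscissaOfAbsConv f < s.re)
    (j : ℕ) : LSeriesHasSum (iteratedDerivCoeff f j) s (iteratedDeriv j (LSeries f) s) := by
  have hsummable : LSeriesSummable (logMul^[j] f) s :=
    LSeriesSummable_of_abscissaOfAbsConv_lt_re (by rwa [LSeries.absicssaOfAbsConv_logPowMul])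
  rw [LSeries_iteratedDeriv j hs]
  refine (LSeriesHasSum_congr s _ fun {n} hn ↦ ?_).2 (hsummable.LSeriesHasSum.smul ((-1) ^ j))
  rw [iteratedDerivCoeff_apply f j hn, Pi.smul_apply, iterate_logMul_apply, smul_eq_mul, neg_pow,
    mul_assoc]

theorem det_iteratedDerivCoeff_ne_zero {f : ℕ → ℂ} {k : ℕ} {a : Fin k → ℕ}
    (ha : Function.Injective a) (ha0 : ∀ i, a i ≠ 0) (hfa : ∀ i, f (a i) ≠ 0) :
    (Matrix.of fun i j : Fin k ↦ iteratedDerivCoeff f j (a i)).det ≠ 0 := by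
  have hmatrix : (Matrix.of fun i j : Fin k ↦ iteratedDerivCoeff f j (a i)) =
      Matrix.of fun i j ↦ f (a i) * Matrix.vandermonde (fun i ↦ -Complex.log (a i)) i j := by
    ext i j
    simp only [Matrix.of_apply, Matrix.vandermonde_apply, iteratedDerivCoeff_apply f _ (ha0 i),
      mul_comm]
  have hlog : Function.Injective fun i ↦ -Complex.log (a i) := fun i j hij ↦ ha <| by
    have hexp := congrArg Complex.exp (neg_injective hij)
    rwa [Complex.exp_log (Nat.cast_ne_zero.2 (ha0 i)), Complex.exp_log (Nat.cast_ne_zero.2 (ha0 j)),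
      Nat.cast_inj] at hexp
  rw [hmatrix, Matrix.det_mul_column]
  exact mul_ne_zero (Finset.prod_ne_zero_iff.2 fun i _ ↦ hfa i)
    (Matrix.det_vandermonde_ne_zero_iff.2 hlog)

theorem algebraicIndependent_iteratedDerivCoeff {f : ℕ → ℂ}
    (hf : {p : ℕ | p.Prime ∧ f p ≠ 0}.Infinite) (k : ℕ) :
    AlgebraicIndependent ℂ fun j : Fin k ↦ iteratedDerivCoeff f j := by
  have hprime (i : Fin k) := Nat.nth_mem_of_infinite hf i
  refine algebraicIndependent_of_det_apply_prime_isUnit (fun i ↦ (hprime i).1) (isUnit_iff_ne_zero.2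
    (det_iteratedDerivCoeff_ne_zero ?_ (fun i ↦ (hprime i).1.ne_zero) fun i ↦ (hprime i).2))
  exact (Nat.nth_injective hf).comp Fin.val_injective

/-- The point `(s, F s, F' s, …, F⁽ⁿ⁾ s)`, with `s` in coordinate `0` and the `j`-th derivative in
coordinate `j + 1`. -/
noncomputable def jet (F : ℂ → ℂ) (n : ℕ) (s : ℂ) (i : Fin (n + 2)) : ℂ :=
  if i.val = 0 then s else iteratedDeriv (i.val - 1) F s

theorem jet_eq_cons (F : ℂ → ℂ) (n : ℕ) (s : ℂ) :
    jet F n s = Fin.cons s fun j : Fin (n + 1) ↦ iteratedDeriv j F s := by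
  funext i
  cases i using Fin.cases <;> simp [jet]

theorem jet_congr {F G : ℂ → ℂ} {s : ℂ} (h : F =ᶠ[𝓝 s] G) (n : ℕ) : jet F n s = jet G n s := by
  funext i
  simp only [jet, h.iteratedDeriv_eq]

theorem eval_cons_eq_sum {R : Type*} [CommSemiring R] {n : ℕ} (P : MvPolynomial (Fin (n + 1)) R)
    (x : R) (v : Fin n → R) :
    eval (Fin.cons x v) P =
      ∑ k ∈ (finSuccEquiv R n P).support, x ^ k * eval v ((finSuccEquiv R n P).coeff k) := by
  rw [eval_eq_eval_mv_eval', Polynomial.eval_map, Polynomial.eval₂_eq_sum, Polynomial.sum_def]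
  exact Finset.sum_congr rfl fun k _ ↦ mul_comm _ _

theorem eventually_abscissaOfAbsConv_lt {f : ℕ → ℂ} (hf : abscissaOfAbsConv f < ⊤) :
    ∀ᶠ x : ℝ in atTop, abscissaOfAbsConv f < (x : ℂ).re := by
  obtain ⟨y, hfy, -⟩ := EReal.lt_iff_exists_real_btwn.1 hf
  filter_upwards [eventually_ge_atTop y] with x hx
  exact hfy.trans_le (EReal.coe_le_coe_iff.2 hx)

theorem LSeries_diffTranscendental {f : ℕ → ℂ} (habs : abscissaOfAbsConv f < ⊤)
    (hf : {p : ℕ | p.Prime ∧ f p ≠ 0}.Infinite) {n : ℕ} {P : MvPolynomial (Fin (n + 2)) ℂ}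
    (hP : ∀ᶠ x : ℝ in atTop, eval (jet (LSeries f) n x) P = 0) : P = 0 := by
  let b (j : Fin (n + 1)) : ArithmeticFunction ℂ := iteratedDerivCoeff f j
  let Q := finSuccEquiv ℂ (n + 1) P
  have hsum : ∀ᶠ x : ℝ in atTop, ∀ k, LSeriesHasSum (aeval b (Q.coeff k)) x
      (eval (fun j : Fin (n + 1) ↦ iteratedDeriv j (LSeries f) x) (Q.coeff k)) := by
    filter_upwards [eventually_abscissaOfAbsConv_lt habs] with x hx k
    have hb (j : Fin (n + 1)) : LSeriesHasSum (b j) x (iteratedDeriv j (LSeries f) x) :=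
      LSeriesHasSum_iteratedDerivCoeff hx j
    exact LSeriesHasSum_aeval hb (Q.coeff k)
  have hrel : ∀ᶠ x : ℝ in atTop,
      ∑ k ∈ Q.support, (x : ℂ) ^ k * LSeries (aeval b (Q.coeff k)) x = 0 := by
    filter_upwards [hP, hsum] with x hPx hx
    rw [jet_eq_cons, eval_cons_eq_sum] at hPx
    simpa only [fun k ↦ (hx k).LSeries_eq] using hPx
  obtain ⟨x₀, hx₀⟩ := hsum.exists
  have hcoeff := eq_zero_of_eventually_sum_pow_mul_LSeries_eq_zero (fun k _ ↦
    (hx₀ k).LSeriesSummable.abscissaOfAbsConv_le.trans_lt (EReal.coe_lt_top _)) hrel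
  have hQ : Q = 0 := Polynomial.support_eq_empty.1 <| Finset.eq_empty_of_forall_notMem fun k hk ↦
    Polynomial.mem_support_iff.1 hk <|
      (algebraicIndependent_iteratedDerivCoeff hf (n + 1)).eq_zero_of_aeval_eq_zero _ (hcoeff k hk)
  exact (map_eq_zero_iff _ (finSuccEquiv ℂ (n + 1)).injective).1 hQ

end LSeries

theorem infinite_setOf_prime_and_dirichletCharacter_ne_zero {R : Type*} [CommMonoidWithZero R]
    [Nontrivial R] {N : ℕ} [NeZero N] (χ : DirichletCharacter R N) :
    {p : ℕ | p.Prime ∧ χ p ≠ 0}.Infinite := by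
  refine (Nat.infinite_setOfPred_prime.sdiff N.primeFactors.finite_toSet).mono fun p hp ↦ ?_
  obtain ⟨hprime, hnot⟩ := hp
  refine ⟨hprime, ?_⟩
  have hcop : p.Coprime N := hprime.coprime_iff_not_dvd.2 fun hdvd ↦
    hnot (Nat.mem_primeFactors.2 ⟨hprime, hdvd, NeZero.ne N⟩)
  exact (((ZMod.isUnit_iff_coprime p N).2 hcop).map χ).ne_zero

theorem dirichletBeta_diffTranscendental_general {N : ℕ} [NeZero N] (χ : DirichletCharacter ℂ N) :
    ¬ ∃ (n : ℕ) (P : MvPolynomial (Fin (n + 2)) ℂ),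
      P ≠ 0 ∧ ∀ᶠ x : ℝ in atTop, eval (jet χ.LFunction n x) P = 0 := by
  rintro ⟨n, P, hP, hzero⟩
  have habs : abscissaOfAbsConv (fun m : ℕ ↦ χ m) < ⊤ := by
    rw [DirichletCharacter.absicssaOfAbsConv_eq_one (NeZero.ne N)]
    exact EReal.coe_lt_top 1
  refine hP (LSeries_diffTranscendental habs
    (infinite_setOf_prime_and_dirichletCharacter_ne_zero χ) ?_)
  filter_upwards [hzero, eventually_gt_atTop 1] with x hx hx1
  have hEq : LSeries (fun m : ℕ ↦ χ m) =ᶠ[𝓝 (x : ℂ)] χ.LFunction := by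
    filter_upwards [(isOpen_lt continuous_const Complex.continuous_re).mem_nhds hx1] with s hs
    exact (χ.LFunction_eq_LSeries hs).symm
  rwa [jet_congr hEq]

/-- The Dirichlet beta function — the entire L-function of the unique nonprincipal
Dirichlet character modulo 4 (agreeing with `∑ (-1)^n (2n+1)^(-s)` for `Re s > 1`) — is
differentially transcendental: there are no `n ∈ ℕ` and nonzero polynomial
`P ∈ ℂ[X₀, …, X_{n+1}]` with `P (s, β s, β' s, …, β⁽ⁿ⁾ s) = 0` for all `s ∈ ℂ`. -/
theorem dirichletBeta_diffTranscendental (χ : DirichletCharacter ℂ 4) (hχ : χ ≠ 1) :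
    ¬ ∃ (n : ℕ) (P : MvPolynomial (Fin (n + 2)) ℂ),
      P ≠ 0 ∧ ∀ s : ℂ,
        MvPolynomial.eval
          (fun i : Fin (n + 2) =>
            if i.val = 0 then s
            else iteratedDeriv (i.val - 1) (DirichletCharacter.LFunction χ) s) P = 0 :=
  fun ⟨n, P, hP, hzero⟩ ↦
    dirichletBeta_diffTranscendental_general χ ⟨n, P, hP, .of_forall fun x ↦ hzero x⟩
end

section
/- The function H₁ meromorphic on ℂ defined by H₁(z) = ∑_{n=0}^∞ 1/(n+z)² for all z ∈ ℂ that are not nonpositive integers (the trigamma function, equal to the second derivative of log Γ) is differentially transcendental: there do not exist N ∈ ℕ and a nonzero polynomial P ∈ ℂ[X₀, X₁, …, X_{N+1}] such that P(z, H₁(z), H₁′(z), …, H₁⁽ᴺ⁾(z)) = 0 for every z ∈ ℂ that is not a nonpositive integer. -/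
/-!
The function `H z = ∑ 1 / (n + z) ^ 2` satisfies `H (z + 1) = H z - 1 / z ^ 2`, so the sequences
`y j n = H⁽ʲ⁾ n` satisfy `y j (n + 1) = y j n + b j / n ^ (j + 2)` with constants `b j ≠ 0`. The
algebraic relations over `ℂ(X)` between the germs at infinity of these sequences form a proper ideal
of `ℂ(X)[Y₀, …, Y_N]` stable under `f(X) ↦ f(X + 1)`, `Y_j ↦ Y_j + b_j / X ^ (j + 2)`. If the ideal
is nonzero, a monic element of minimal degree in it is fixed by this map, because the difference
between the element and its image has smaller degree. By induction on the degree the partial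
derivatives of a fixed polynomial are constants `c_j` in `ℂ`, hence the polynomial is affine and
`∑ c_j b_j / X ^ (j + 2)` has the form `g(X + 1) - g(X)`. Since a pole of `g` would propagate to
infinitely many translates, all `c_j` vanish and the ideal contains a unit, a contradiction.
-/

section TwistedTranslate

open MvPolynomial

variable {K ι : Type*}

/-- The ring endomorphism of `K[X_i]` acting on coefficients by `σ` and sending `X_i` to
`X_i + r_i`. It is the action on polynomials in elements `y_i` of a difference ring that satisfy
the difference equations `τ y_i = y_i + r_i`. -/
noncomputable def twistedTranslate [CommSemiring K] (σ : K →+* K) (r : ι → K) :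
    MvPolynomial ι K →+* MvPolynomial ι K :=
  eval₂Hom (C.comp σ) fun i => X i + C (r i)

/-- The family `r` is linearly independent over the constants `{c | σ c = c}` modulo the
coboundaries `σ g - g`. -/
def LinearIndependentModCoboundary [CommRing K] (σ : K →+* K) (r : ι → K) : Prop :=
  ∀ (s : Finset ι) (c : ι → K) (g : K), (∀ i ∈ s, σ (c i) = c i) →
    σ g - g = ∑ i ∈ s, c i * r i → ∀ i ∈ s, c i = 0

section CommSemiring

variable [CommSemiring K] (σ : K →+* K) (r : ι → K)

@[simp]
lemma twistedTranslate_C (a : K) : twistedTranslate σ r (C a) = C (σ a) :=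
  eval₂_C _ _ a

@[simp]
lemma twistedTranslate_X (i : ι) : twistedTranslate σ r (X i) = X i + C (r i) :=
  eval₂_X _ _ i

lemma pderiv_twistedTranslate (i : ι) (P : MvPolynomial ι K) :
    pderiv i (twistedTranslate σ r P) = twistedTranslate σ r (pderiv i P) := by
  classical
  induction P using MvPolynomial.induction_on with
  | C a => simp
  | add p q hp hq => simp [hp, hq]
  | mul_X p j hp => simp [hp, Pi.single_apply, apply_ite (twistedTranslate σ r)]

lemma twistedTranslate_monomial (s : ι →₀ ℕ) (a : K) :
    twistedTranslate σ r (monomial s a) = C (σ a) * s.prod fun i n => (X i + C (r i)) ^ n :=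
  eval₂_monomial _ _

lemma twistedTranslate_eq_sum (P : MvPolynomial ι K) :
    twistedTranslate σ r P =
      ∑ s ∈ P.support, C (σ (coeff s P)) * s.prod fun i n => (X i + C (r i)) ^ n := by
  conv_lhs => rw [P.as_sum, map_sum]
  simp only [twistedTranslate_monomial]

lemma totalDegree_pderiv_le (i : ι) (P : MvPolynomial ι K) :
    (pderiv i P).totalDegree ≤ P.totalDegree - 1 := by
  refine Finset.sup_le fun s hs => Nat.le_sub_one_of_lt ?_
  rw [mem_support_iff, coeff_pderiv] at hs
  have hle := le_totalDegree (mem_support_iff.2 (left_ne_zero_of_mul hs))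
  rw [Finsupp.sum_add_index' (by simp) (by simp), Finsupp.sum_single_index rfl] at hle
  exact hle

end CommSemiring

section LeadingTerm

variable [CommRing K] (m : MonomialOrder ι) (σ : K →+* K) (r : ι → K)

lemma monic_prod_X_add_C_pow (s : ι →₀ ℕ) :
    m.Monic (s.prod fun i n => (X i + C (r i)) ^ n) :=
  MonomialOrder.Monic.prod fun i _ => (m.monic_X_add_C i (r i)).pow

variable [IsDomain K]

lemma degree_prod_X_add_C_pow (s : ι →₀ ℕ) :
    m.degree (s.prod fun i n => (X i + C (r i)) ^ n) = s := by
  rw [Finsupp.prod, m.degree_prod fun i _ => pow_ne_zero _ (m.monic_X_add_C i (r i)).ne_zero]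
  simp only [m.degree_pow, m.degree_X_add_C, Finsupp.smul_single_one]
  exact s.sum_single

lemma coeff_twistedTranslate_of_degree_le {P : MvPolynomial ι K} {d : ι →₀ ℕ}
    (hd : m.toSyn (m.degree P) ≤ m.toSyn d) :
    coeff d (twistedTranslate σ r P) = σ (coeff d P) := by
  rw [twistedTranslate_eq_sum, coeff_sum, Finset.sum_eq_single d]
  · have hmonic := (monic_prod_X_add_C_pow m r d).coeff_degree
    rw [degree_prod_X_add_C_pow] at hmonic
    rw [coeff_C_mul, hmonic, mul_one]
  · intro s hs hne
    have hlt : m.toSyn s < m.toSyn d :=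
      ((m.le_degree hs).trans hd).lt_of_ne (m.toSyn.injective.ne hne)
    have hdeg : m.toSyn (m.degree (s.prod fun i n => (X i + C (r i)) ^ n)) < m.toSyn d := by
      rwa [degree_prod_X_add_C_pow]
    rw [coeff_C_mul, m.coeff_eq_zero_of_lt hdeg, mul_zero]
  · intro hd
    rw [notMem_support_iff.1 hd, map_zero, C_0, zero_mul, coeff_zero]

lemma degree_twistedTranslate_sub_lt {P : MvPolynomial ι K} (hP : m.Monic P)
    (hne : twistedTranslate σ r P ≠ P) :
    m.toSyn (m.degree (twistedTranslate σ r P - P)) < m.toSyn (m.degree P) := by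
  by_contra! hle
  refine m.coeff_degree_ne_zero_iff.2 (sub_ne_zero.2 hne) ?_
  rw [coeff_sub, coeff_twistedTranslate_of_degree_le m σ r hle]
  rcases hle.eq_or_lt with heq | hlt
  · rw [← m.toSyn.injective heq, hP.coeff_degree, map_one, sub_self]
  · rw [m.coeff_eq_zero_of_lt hlt, map_zero, sub_self]

end LeadingTerm

section CharZero

variable [CommRing K] [NoZeroDivisors K] [CharZero K]

lemma eq_C_of_forall_pderiv_eq_zero_s13 {P : MvPolynomial ι K} (h : ∀ i, pderiv i P = 0) :
    P = C (coeff 0 P) := by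
  classical
  ext s
  rw [coeff_C]
  split_ifs with hs
  · rw [hs]
  · obtain ⟨i, hi⟩ := Finsupp.support_nonempty_iff.2 (Ne.symm hs)
    have hcoeff := coeff_pderiv (i := i) P (s - Finsupp.single i 1)
    rw [Finsupp.sub_add_single_one_cancel (Finsupp.mem_support_iff.1 hi), h i, coeff_zero]
      at hcoeff
    exact (mul_eq_zero.1 hcoeff.symm).resolve_right (Nat.cast_add_one_ne_zero _)

lemma eq_C_add_sum_of_forall_pderiv_eq_C {P : MvPolynomial ι K} {c : ι → K}
    (h : ∀ i, pderiv i P = C (c i)) :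
    ∃ a, P = C a + ∑ i ∈ P.vars, C (c i) * X i := by
  classical
  refine ⟨_, sub_eq_iff_eq_add.1 (eq_C_of_forall_pderiv_eq_zero_s13 fun i => ?_)⟩
  rw [map_sub, map_sum, sub_eq_zero]
  by_cases hi : i ∈ P.vars
  · simp [h, Pi.single_apply, hi]
  · simp [Pi.single_apply, hi, pderiv_eq_zero_of_notMem_vars hi]

lemma exists_eq_C_of_twistedTranslate_eq_self {σ : K →+* K} {r : ι → K}
    (hr : LinearIndependentModCoboundary σ r) {P : MvPolynomial ι K}
    (hP : twistedTranslate σ r P = P) : ∃ a, P = C a := by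
  induction hn : P.totalDegree using Nat.strong_induction_on generalizing P with
  | _ n ih =>
  rcases n.eq_zero_or_pos with rfl | hpos
  · exact ⟨_, totalDegree_eq_zero_iff_eq_C.1 hn⟩
  have hfixed : ∀ i, twistedTranslate σ r (pderiv i P) = pderiv i P := fun i => by
    rw [← pderiv_twistedTranslate, hP]
  have hconst : ∀ i, ∃ c, pderiv i P = C c := fun i =>
    ih _ (((totalDegree_pderiv_le i P).trans_lt (by omega)).trans_eq hn) (hfixed i) rfl
  choose c hc using hconst
  have hσc : ∀ i, σ (c i) = c i := fun i => C_injective ι K <| by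
    rw [← twistedTranslate_C σ r, ← hc, hfixed]
  obtain ⟨a, ha⟩ := eq_C_add_sum_of_forall_pderiv_eq_C hc
  have hcoboundary : σ (-a) - -a = ∑ i ∈ P.vars, c i * r i := by
    apply C_injective ι K
    rw [ha] at hP
    simp only [map_add, map_sum, map_mul, twistedTranslate_C, twistedTranslate_X, hσc, mul_add,
      Finset.sum_add_distrib] at hP
    simp only [map_sub, map_neg, map_sum, map_mul]
    linear_combination -hP
  have hc0 := hr P.vars c (-a) (fun i _ => hσc i) hcoboundary
  refine ⟨a, ha.trans ?_⟩
  rw [Finset.sum_eq_zero fun i hi => by rw [hc0 i hi, C_0, zero_mul], add_zero]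

end CharZero

lemma nonempty_monomialOrder.{u} (ι : Type u) : Nonempty (MonomialOrder.{u, u} ι) := by
  obtain ⟨_, _⟩ := exists_wellFoundedLT ι
  exact ⟨MonomialOrder.lex (σ := ιᵒᵈ)⟩

variable [Field K] [CharZero K] {σ : K →+* K} {r : ι → K}

lemma ideal_eq_bot_of_twistedTranslate_mem (hr : LinearIndependentModCoboundary σ r)
    {I : Ideal (MvPolynomial ι K)} (hI : I ≠ ⊤) (hmem : ∀ P ∈ I, twistedTranslate σ r P ∈ I) :
    I = ⊥ := by
  obtain ⟨m⟩ := nonempty_monomialOrder ι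
  by_contra hbot
  obtain ⟨P₀, hP₀⟩ := Submodule.exists_mem_ne_zero_of_ne_bot hbot
  obtain ⟨P, ⟨hPI, hP0⟩, hmin⟩ :=
    exists_minimalFor_of_wellFoundedLT (fun P => P ∈ I ∧ P ≠ 0) (m.toSyn <| m.degree ·) ⟨P₀, hP₀⟩
  have hlc : (m.leadingCoeff P)⁻¹ ≠ 0 := inv_ne_zero (m.leadingCoeff_ne_zero_iff.2 hP0)
  set Q := C (m.leadingCoeff P)⁻¹ * P with hQ
  have hQI : Q ∈ I := I.mul_mem_left _ hPI
  have hQdeg : m.degree Q = m.degree P := by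
    rw [hQ, ← smul_eq_C_mul, m.degree_smul_of_isRegular (IsRegular.of_ne_zero hlc)]
  have hQmonic : m.Monic Q := by
    rw [MonomialOrder.Monic, MonomialOrder.leadingCoeff, hQdeg, hQ, coeff_C_mul]
    exact inv_mul_cancel₀ (m.leadingCoeff_ne_zero_iff.2 hP0)
  have hfixed : twistedTranslate σ r Q = Q := by
    by_contra hne
    have hlt := hQdeg ▸ degree_twistedTranslate_sub_lt m σ r hQmonic hne
    exact hlt.not_ge (hmin ⟨I.sub_mem (hmem Q hQI) hQI, sub_ne_zero.2 hne⟩ hlt.le)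
  obtain ⟨a, ha⟩ := exists_eq_C_of_twistedTranslate_eq_self hr hfixed
  have ha0 : a ≠ 0 := fun h => hQmonic.ne_zero (by rw [ha, h, C_0])
  exact hI (I.eq_top_of_isUnit_mem (ha ▸ hQI) (ha0.isUnit.map C))

theorem algebraicIndependent_of_map_eq_add {R : Type*} [CommRing R] [Nontrivial R] [Algebra K R]
    (hr : LinearIndependentModCoboundary σ r) {τ : R →+* R}
    (hτ : ∀ a, τ (algebraMap K R a) = algebraMap K R (σ a)) {y : ι → R}
    (hy : ∀ i, τ (y i) = y i + algebraMap K R (r i)) : AlgebraicIndependent K y := by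
  have hcomm : (aeval y : MvPolynomial ι K →ₐ[K] R).toRingHom.comp (twistedTranslate σ r) =
      τ.comp (aeval y : MvPolynomial ι K →ₐ[K] R).toRingHom := by
    ext <;> simp [hτ, hy]
  refine (RingHom.injective_iff_ker_eq_bot _).2 <|
    ideal_eq_bot_of_twistedTranslate_mem hr (RingHom.ker_ne_top _) fun P hP => ?_
  rw [RingHom.mem_ker] at hP ⊢
  exact (DFunLike.congr_fun hcomm P).trans ((congrArg τ hP).trans (map_zero τ))

end TwistedTranslate

section RatFuncShift

open Polynomial

variable {F : Type*} [Field F]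

/-- The shift `f(X) ↦ f(X + 1)` on rational functions, induced by `Polynomial.taylor 1`. -/
noncomputable def ratFuncShift (F : Type*) [Field F] : RatFunc F →+* RatFunc F :=
  IsFractionRing.map (A := F[X]) (B := F[X]) (j := (taylorAlgHom (1 : F)).toRingHom)
    (taylor_injective 1)

@[simp]
lemma ratFuncShift_algebraMap (p : F[X]) :
    ratFuncShift F (algebraMap F[X] (RatFunc F) p) = algebraMap F[X] (RatFunc F) (taylor 1 p) := by
  unfold ratFuncShift IsFractionRing.map
  rw [IsLocalization.map_eq]
  rfl

lemma mul_denom_mul_taylor_denom {f : RatFunc F} {h d : F[X]} (hd : d ≠ 0)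
    (hf : ratFuncShift F f - f = algebraMap F[X] (RatFunc F) h / algebraMap F[X] (RatFunc F) d) :
    h * (f.denom * taylor 1 f.denom) =
      d * (taylor 1 f.num * f.denom - f.num * taylor 1 f.denom) := by
  have hshift : ratFuncShift F f = algebraMap F[X] (RatFunc F) (taylor 1 f.num) /
      algebraMap F[X] (RatFunc F) (taylor 1 f.denom) := by
    rw [← ratFuncShift_algebraMap, ← ratFuncShift_algebraMap, ← map_div₀, f.num_div_denom]
  have hd' := RatFunc.algebraMap_ne_zero hd
  have hq := RatFunc.algebraMap_ne_zero f.denom_ne_zero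
  have hq' := RatFunc.algebraMap_ne_zero <|
    (map_ne_zero_iff (taylor (1 : F)) (taylor_injective 1)).2 f.denom_ne_zero
  nth_rw 2 [← f.num_div_denom] at hf
  rw [hshift, div_sub_div _ _ hq' hq, div_eq_div_iff (mul_ne_zero hq' hq) hd'] at hf
  apply RatFunc.algebraMap_injective F
  simp only [map_mul, map_sub]
  linear_combination -hf

lemma eval_num_ne_zero_of_isRoot_denom {f : RatFunc F} {a : F} (ha : f.denom.IsRoot a) :
    f.num.eval a ≠ 0 := fun hnum => by
  obtain ⟨u, v, huv⟩ := f.isCoprime_num_denom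
  simpa [hnum, ha.eq_zero] using congrArg (eval a) huv

lemma taylor_one_denom_eq_of_ratFuncShift_eq_self {f : RatFunc F} (hf : ratFuncShift F f = f) :
    taylor 1 f.denom = f.denom := by
  have h := mul_denom_mul_taylor_denom (f := f) (h := 0) one_ne_zero (by simp [hf])
  have hdvd : f.denom ∣ taylor 1 f.denom :=
    f.isCoprime_num_denom.symm.dvd_of_dvd_mul_left ⟨taylor 1 f.num, by linear_combination h⟩
  refine eq_of_monic_of_dvd_of_natDegree_le f.monic_denom ?_ hdvd (natDegree_taylor _ _).le
  rw [Monic, leadingCoeff_taylor, f.monic_denom.leadingCoeff]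

variable [CharZero F]

lemma eq_zero_of_isRoot_add_natCast_mul {p : F[X]} {a d : F} (hd : d ≠ 0) (ha : p.IsRoot a)
    (hstep : ∀ n : ℕ, p.IsRoot (a + n * d) → p.IsRoot (a + n * d + d)) : p = 0 := by
  have hroot (n : ℕ) : p.IsRoot (a + n * d) := by
    induction n with
    | zero => simpa using ha
    | succ n ih => simpa [add_mul, add_assoc] using hstep n ih
  refine p.eq_zero_of_infinite_isRoot <|
    (Set.infinite_range_of_injective (f := fun n : ℕ => a + n * d) fun m n h => ?_).mono ?_
  · simpa [hd] using h
  · rintro _ ⟨n, rfl⟩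
    exact hroot n

lemma eq_C_of_taylor_one_eq_self {p : F[X]} (hp : taylor 1 p = p) : p = C (p.eval 0) := by
  have heval (a : F) : p.eval (a + 1) = p.eval a := by rw [← taylor_eval, hp]
  refine sub_eq_zero.1 (eq_zero_of_isRoot_add_natCast_mul (a := 0) one_ne_zero ?_ fun n hn => ?_)
  · simp
  · simpa [heval] using hn

lemma exists_eq_C_of_ratFuncShift_eq_self {f : RatFunc F} (hf : ratFuncShift F f = f) :
    ∃ a, f = RatFunc.C a := by
  have hdenom := taylor_one_denom_eq_of_ratFuncShift_eq_self hf
  have h := mul_denom_mul_taylor_denom (f := f) (h := 0) one_ne_zero (by simp [hf])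
  have hnum : taylor 1 f.num = f.num := by
    refine mul_right_cancel₀ f.denom_ne_zero ?_
    rw [hdenom] at h
    linear_combination -h
  rw [← f.num_div_denom, eq_C_of_taylor_one_eq_self hnum, eq_C_of_taylor_one_eq_self hdenom]
  exact ⟨f.num.eval 0 / f.denom.eval 0, by simp [RatFunc.algebraMap_C]⟩

-- A pole of `f` at `0` or `1` would propagate along `0, -1, -2, …` or `1, 2, 3, …`, since the only
-- possible pole of `f(X + 1) - f(X)` is `0`.
lemma X_pow_dvd_of_ratFuncShift_sub_eq_div {f : RatFunc F} {h : F[X]} {M : ℕ}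
    (hf : ratFuncShift F f - f =
      algebraMap F[X] (RatFunc F) h / algebraMap F[X] (RatFunc F) (X ^ M)) : X ^ M ∣ h := by
  have hclear := mul_denom_mul_taylor_denom (pow_ne_zero M X_ne_zero) hf
  have heval {a : F} (ha : a ≠ 0) : f.denom.IsRoot a ↔ f.denom.IsRoot (a + 1) := by
    have hclear_a := congrArg (eval a) hclear
    simp only [eval_mul, eval_sub, eval_pow, eval_X, taylor_eval] at hclear_a
    constructor <;> intro hroot <;>
      simpa [hroot.eq_zero, ha, eval_num_ne_zero_of_isRoot_denom hroot] using hclear_a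
  have hzero : ¬f.denom.IsRoot 0 := fun h0 => f.denom_ne_zero <|
    eq_zero_of_isRoot_add_natCast_mul (d := -1) (by simp) h0 fun n hn =>
      (heval (by simpa [← neg_add_rev, add_comm] using Nat.cast_add_one_ne_zero (R := F) n)).2
        (by simpa using hn)
  have hone : ¬f.denom.IsRoot 1 := fun h1 => f.denom_ne_zero <|
    eq_zero_of_isRoot_add_natCast_mul one_ne_zero h1 fun n hn =>
      (heval (by simpa [add_comm] using Nat.cast_add_one_ne_zero (R := F) n)).1 hn
  refine (IsCoprime.pow_left ?_).dvd_of_dvd_mul_right ⟨_, hclear⟩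
  rw [irreducible_X.coprime_iff_not_dvd, X_dvd_iff, coeff_zero_eq_eval_zero, eval_mul, taylor_eval,
    zero_add]
  exact mul_ne_zero hzero hone

lemma linearIndependentModCoboundary_C_div_X_pow {ι : Type*} {b : ι → F} {e : ι → ℕ}
    (hb : ∀ i, b i ≠ 0) (he : Function.Injective e) (he0 : ∀ i, e i ≠ 0) :
    LinearIndependentModCoboundary (ratFuncShift F)
      fun i => RatFunc.C (b i) / RatFunc.X ^ e i := by
  intro s c g hc hg j hj
  choose! a ha using fun i hi => exists_eq_C_of_ratFuncShift_eq_self (hc i hi)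
  set M := s.sup e
  have hle {i : ι} (hi : i ∈ s) : e i ≤ M := Finset.le_sup hi
  have hsum : ratFuncShift F g - g =
      algebraMap F[X] (RatFunc F) (∑ i ∈ s, C (a i * b i) * X ^ (M - e i)) /
        algebraMap F[X] (RatFunc F) (X ^ M) := by
    rw [hg, map_sum, Finset.sum_div]
    refine Finset.sum_congr rfl fun i hi => ?_
    rw [ha i hi, ← Nat.sub_add_cancel (hle hi)]
    simp only [map_mul, map_pow, RatFunc.algebraMap_C, RatFunc.algebraMap_X, Nat.add_sub_cancel]
    field_simp [RatFunc.X_ne_zero]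
    ring
  have hcoeff := X_pow_dvd_iff.1 (X_pow_dvd_of_ratFuncShift_sub_eq_div hsum) (M - e j)
    (by have := hle hj; have := he0 j; omega)
  have hsub_inj {i : ι} (hi : i ∈ s) (h : M - e j = M - e i) : i = j :=
    he (by have := hle hi; have := hle hj; omega)
  simp only [finsetSum_coeff, coeff_C_mul, coeff_X_pow] at hcoeff
  rw [Finset.sum_eq_single_of_mem j hj fun i hi hij => by
    rw [if_neg fun h => hij (hsub_inj hi h), mul_zero]] at hcoeff
  rw [if_pos rfl, mul_one] at hcoeff
  rw [ha j hj, (mul_eq_zero.1 hcoeff).resolve_right (hb j), map_zero]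

end RatFuncShift

section SeqGerm

open Polynomial Filter

/-- Germs at infinity of sequences, i.e. sequences up to equality of all but finitely many terms. -/
abbrev SeqGerm (R : Type*) : Type _ := Germ (atTop : Filter ℕ) R

/-- The shift `(u_n) ↦ (u_{n + 1})` on germs of sequences. -/
def seqGermShift (R : Type*) [Semiring R] : SeqGerm R →+* SeqGerm R where
  toFun u := u.compTendsto (· + 1) (tendsto_add_atTop_nat 1)
  map_zero' := rfl
  map_one' := rfl
  map_add' u v := Germ.inductionOn₂ u v fun _ _ => rfl
  map_mul' u v := Germ.inductionOn₂ u v fun _ _ => rfl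

@[simp]
lemma seqGermShift_coe {R : Type*} [Semiring R] (u : ℕ → R) :
    seqGermShift R (u : SeqGerm R) = ((fun n => u (n + 1) : ℕ → R) : SeqGerm R) :=
  rfl

/-- The germ of the sequence `n ↦ p(n)` of values of a polynomial `p`. -/
noncomputable def polynomialToSeqGerm (R : Type*) [CommSemiring R] : R[X] →+* SeqGerm R :=
  (Germ.coeRingHom atTop).comp (RingHom.pi fun n : ℕ => evalRingHom (n : R))

@[simp]
lemma polynomialToSeqGerm_apply {R : Type*} [CommSemiring R] (p : R[X]) :
    polynomialToSeqGerm R p = ((fun n => p.eval (n : R) : ℕ → R) : SeqGerm R) :=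
  rfl

lemma eventually_eval_natCast_ne_zero {R : Type*} [CommRing R] [IsDomain R] [CharZero R] {p : R[X]}
    (hp : p ≠ 0) : ∀ᶠ n : ℕ in atTop, p.eval (n : R) ≠ 0 := by
  rw [← Nat.cofinite_eq_atTop]
  refine Nat.cast_injective.tendsto_cofinite.eventually (p := fun x => p.eval x ≠ 0) ?_
  filter_upwards [(p.finite_setOfPred_isRoot hp).compl_mem_cofinite] with x hx using hx

variable {F : Type*} [Field F] [CharZero F]

lemma isUnit_polynomialToSeqGerm {p : F[X]} (hp : p ≠ 0) : IsUnit (polynomialToSeqGerm F p) := by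
  refine IsUnit.of_mul_eq_one ((fun n => (p.eval (n : F))⁻¹ : ℕ → F) : SeqGerm F) ?_
  refine Germ.coe_eq.2 ?_
  filter_upwards [eventually_eval_natCast_ne_zero hp] with n hn using mul_inv_cancel₀ hn

/-- The extension of `polynomialToSeqGerm` to rational functions: a rational function has no poles
at large natural numbers, so the germ of its values is well defined. -/
noncomputable def ratFuncToSeqGerm (F : Type*) [Field F] [CharZero F] : RatFunc F →+* SeqGerm F :=
  IsLocalization.lift (M := nonZeroDivisors F[X]) (g := polynomialToSeqGerm F)
    fun p => isUnit_polynomialToSeqGerm (nonZeroDivisors.ne_zero p.2)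

lemma ratFuncToSeqGerm_algebraMap (p : F[X]) :
    ratFuncToSeqGerm F (algebraMap F[X] (RatFunc F) p) = polynomialToSeqGerm F p :=
  IsLocalization.lift_eq _ p

lemma ratFuncToSeqGerm_div (p : F[X]) {q : F[X]} (hq : q ≠ 0) :
    ratFuncToSeqGerm F (algebraMap F[X] (RatFunc F) p / algebraMap F[X] (RatFunc F) q) =
      ((fun n => p.eval (n : F) / q.eval (n : F) : ℕ → F) : SeqGerm F) := by
  refine (isUnit_polynomialToSeqGerm hq).mul_right_cancel ?_
  rw [← ratFuncToSeqGerm_algebraMap, ← map_mul, div_mul_cancel₀ _ (RatFunc.algebraMap_ne_zero hq),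
    ratFuncToSeqGerm_algebraMap, ratFuncToSeqGerm_algebraMap]
  refine Germ.coe_eq.2 ?_
  filter_upwards [eventually_eval_natCast_ne_zero hq] with n hn using (div_mul_cancel₀ _ hn).symm

lemma seqGermShift_ratFuncToSeqGerm (f : RatFunc F) :
    seqGermShift F (ratFuncToSeqGerm F f) = ratFuncToSeqGerm F (ratFuncShift F f) := by
  suffices h : (seqGermShift F).comp (ratFuncToSeqGerm F) =
      (ratFuncToSeqGerm F).comp (ratFuncShift F) from DFunLike.congr_fun h f
  refine IsLocalization.ringHom_ext (nonZeroDivisors F[X]) (RingHom.ext fun p => ?_)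
  simp [ratFuncToSeqGerm_algebraMap, taylor_eval]

noncomputable instance : Algebra (RatFunc F) (SeqGerm F) :=
  (ratFuncToSeqGerm F).toAlgebra

lemma algebraMap_ratFunc_seqGerm :
    algebraMap (RatFunc F) (SeqGerm F) = ratFuncToSeqGerm F :=
  rfl

variable {ι : Type*} {b : ι → F} {e : ι → ℕ} {y : ι → ℕ → F}

theorem algebraicIndependent_ratFunc_of_eventually_eq_add (hb : ∀ i, b i ≠ 0)
    (he : Function.Injective e) (he0 : ∀ i, e i ≠ 0)
    (hy : ∀ i, ∀ᶠ n : ℕ in atTop, y i (n + 1) = y i n + b i / (n : F) ^ e i) :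
    AlgebraicIndependent (RatFunc F) fun i => (y i : SeqGerm F) := by
  refine algebraicIndependent_of_map_eq_add (linearIndependentModCoboundary_C_div_X_pow hb he he0)
    (τ := seqGermShift F) seqGermShift_ratFuncToSeqGerm fun i => ?_
  have hgerm := ratFuncToSeqGerm_div (C (b i)) (pow_ne_zero (e i) (X_ne_zero (R := F)))
  rw [map_pow, RatFunc.algebraMap_C, RatFunc.algebraMap_X] at hgerm
  rw [algebraMap_ratFunc_seqGerm, hgerm]
  refine Germ.coe_eq.2 ?_
  filter_upwards [hy i] with n hn
  simpa using hn

lemma aeval_map_optionEquivRight (y : ι → ℕ → F) (P : MvPolynomial (Option ι) F) :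
    MvPolynomial.aeval (fun i => (y i : SeqGerm F)) (MvPolynomial.map
        (algebraMap F[X] (RatFunc F)) (MvPolynomial.optionEquivRight F ι P)) =
      ((fun n => P.eval fun i => i.elim (n : F) (y · n) : ℕ → F) : SeqGerm F) := by
  induction P using MvPolynomial.induction_on with
  | C a =>
    simp [algebraMap_ratFunc_seqGerm, ratFuncToSeqGerm_algebraMap, -RatFunc.algebraMap_C]
  | add P Q hP hQ =>
    simp only [map_add, hP, hQ]
    rfl
  | mul_X P i hP =>
    rw [map_mul, map_mul, map_mul, hP]
    cases i with
    | none =>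
      simp only [MvPolynomial.optionEquivRight_apply, MvPolynomial.aeval_X, Option.elim_none,
        MvPolynomial.map_C, MvPolynomial.algHom_C, algebraMap_ratFunc_seqGerm,
        ratFuncToSeqGerm_algebraMap, polynomialToSeqGerm_apply, eval_X, map_mul,
        MvPolynomial.eval_X]
      rfl
    | some i =>
      simp only [MvPolynomial.optionEquivRight_apply, MvPolynomial.aeval_X, Option.elim_some,
        MvPolynomial.map_X, map_mul, MvPolynomial.eval_X]
      rfl

theorem frequently_eval_natCast_ne_zero_of_eventually_eq_add (hb : ∀ i, b i ≠ 0)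
    (he : Function.Injective e) (he0 : ∀ i, e i ≠ 0)
    (hy : ∀ i, ∀ᶠ n : ℕ in atTop, y i (n + 1) = y i n + b i / (n : F) ^ e i)
    {P : MvPolynomial (Option ι) F} (hP : P ≠ 0) :
    ∃ᶠ n : ℕ in atTop, P.eval (fun i => i.elim (n : F) (y · n)) ≠ 0 := by
  intro hzero
  have hmap : MvPolynomial.map (algebraMap F[X] (RatFunc F))
      (MvPolynomial.optionEquivRight F ι P) = 0 := by
    refine (map_eq_zero_iff _ (algebraicIndependent_ratFunc_of_eventually_eq_add hb he he0 hy)).1 ?_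
    rw [aeval_map_optionEquivRight]
    exact Germ.coe_eq.2 (hzero.mono fun n => not_not.1)
  rw [map_eq_zero_iff _ (MvPolynomial.map_injective _ (RatFunc.algebraMap_injective F)),
    EmbeddingLike.map_eq_zero_iff] at hmap
  exact hP hmap

end SeqGerm

section IteratedDeriv

open Filter Topology

variable {𝕜 : Type*} [NontriviallyNormedField 𝕜]

lemma iteratedDeriv_const_div_pow (a : 𝕜) (m j : ℕ) (z : 𝕜) :
    iteratedDeriv j (fun w => a / w ^ m) z =
      a * (∏ i ∈ Finset.range j, (-(m : 𝕜) - i)) / z ^ (m + j) := by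
  have hzpow : (fun w : 𝕜 => a / w ^ m) = fun w => a * w ^ (-m : ℤ) := by
    simp only [zpow_neg, zpow_natCast, div_eq_mul_inv]
  have hexp : z ^ (-m - j : ℤ) = (z ^ (m + j))⁻¹ := by
    rw [← neg_add', zpow_neg, ← Nat.cast_add, zpow_natCast]
  rw [hzpow, iteratedDeriv_const_mul_field, iteratedDeriv_eq_iterate, iter_deriv_zpow, hexp]
  push_cast
  ring

lemma iteratedDeriv_add_const_eq_add {E : Type*} [NormedAddCommGroup E] [NormedSpace 𝕜 E]
    {f g : 𝕜 → E} {c x : 𝕜} {j : ℕ} (hf : ContDiffAt 𝕜 j f x) (hg : ContDiffAt 𝕜 j g x)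
    (h : ∀ᶠ z in 𝓝 x, f (z + c) = f z + g z) :
    iteratedDeriv j f (x + c) = iteratedDeriv j f x + iteratedDeriv j g x := by
  rw [← iteratedDeriv_fun_add hf hg, ← EventuallyEq.iteratedDeriv_eq j h,
    iteratedDeriv_comp_add_const]

end IteratedDeriv

section TsumInvPow

open Complex

lemma summable_one_div_natCast_add_pow {δ : ℝ} (hδ : 0 < δ) {k : ℕ} (hk : 1 < k) :
    Summable fun n : ℕ => 1 / ((n : ℝ) + δ) ^ k := by
  refine ((Real.summable_one_div_nat_add_rpow δ k).2 (by exact_mod_cast hk)).congr fun n => ?_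
  rw [abs_of_pos (by positivity), Real.rpow_natCast]

lemma norm_one_div_natCast_add_pow_le {δ : ℝ} (hδ : 0 < δ) {z : ℂ} (hz : δ ≤ z.re) (n k : ℕ) :
    ‖1 / ((n : ℂ) + z) ^ k‖ ≤ 1 / ((n : ℝ) + δ) ^ k := by
  have hle : (n : ℝ) + δ ≤ ‖(n : ℂ) + z‖ :=
    (by simpa using hz : (n : ℝ) + δ ≤ ((n : ℂ) + z).re).trans (re_le_norm _)
  rw [norm_div, norm_one, norm_pow]
  gcongr

lemma ne_neg_natCast_of_re_pos {z : ℂ} (hz : 0 < z.re) (k : ℕ) : z ≠ -(k : ℂ) := by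
  rintro rfl
  simp [k.cast_nonneg.not_gt] at hz

variable {k : ℕ} {z : ℂ}

lemma tsum_one_div_natCast_add_add_one_pow (hk : 1 < k) (hz : 0 < z.re) :
    ∑' n : ℕ, 1 / ((n : ℂ) + (z + 1)) ^ k = ∑' n : ℕ, 1 / ((n : ℂ) + z) ^ k - 1 / z ^ k := by
  have hsummable : Summable fun n : ℕ => 1 / ((n : ℂ) + z) ^ k :=
    .of_norm_bounded (summable_one_div_natCast_add_pow hz hk)
      (norm_one_div_natCast_add_pow_le hz le_rfl · k)
  rw [hsummable.tsum_eq_zero_add, Nat.cast_zero, zero_add, add_sub_cancel_left]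
  refine tsum_congr fun n => ?_
  push_cast
  ring

lemma analyticAt_tsum_one_div_natCast_add_pow (hk : 1 < k) (hz : 0 < z.re) :
    AnalyticAt ℂ (fun w => ∑' n : ℕ, 1 / ((n : ℂ) + w) ^ k) z := by
  obtain ⟨δ, hδ, hδz⟩ := exists_between hz
  have hopen : IsOpen {w : ℂ | δ < w.re} := isOpen_lt continuous_const continuous_re
  refine DifferentiableOn.analyticAt (s := {w : ℂ | δ < w.re}) ?_ (hopen.mem_nhds hδz)
  refine differentiableOn_tsum_of_summable_norm (summable_one_div_natCast_add_pow hδ hk)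
    (fun n w (hw : δ < w.re) => ?_) hopen fun n w (hw : δ < w.re) =>
      norm_one_div_natCast_add_pow_le hδ hw.le n k
  have hne : (n : ℂ) + w ≠ 0 := fun h =>
    ne_neg_natCast_of_re_pos (hδ.trans hw) n (eq_neg_of_add_eq_zero_right h)
  fun_prop (disch := exact pow_ne_zero k hne)

end TsumInvPow

section DifferentialTranscendence

open Filter Topology

theorem frequently_eval_iteratedDeriv_ne_zero_of_map_add_one {𝕜 : Type*}
    [NontriviallyNormedField 𝕜] [CharZero 𝕜] {f : 𝕜 → 𝕜} {a : 𝕜} {m N : ℕ} (ha : a ≠ 0) (hm : m ≠ 0)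
    (hf : ∀ᶠ n : ℕ in atTop, ContDiffAt 𝕜 N f n)
    (hadd : ∀ᶠ n : ℕ in atTop, ∀ᶠ z in 𝓝 (n : 𝕜), f (z + 1) = f z + a / z ^ m)
    {P : MvPolynomial (Fin (N + 2)) 𝕜} (hP : P ≠ 0) :
    ∃ᶠ n : ℕ in atTop, MvPolynomial.eval
      (fun i : Fin (N + 2) =>
        if i.val = 0 then (n : 𝕜) else iteratedDeriv (i.val - 1) f n) P ≠ 0 := by
  let b (j : Fin (N + 1)) : 𝕜 := a * ∏ i ∈ Finset.range j, (-(m : 𝕜) - i)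
  have hb (j : Fin (N + 1)) : b j ≠ 0 := by
    refine mul_ne_zero ha (Finset.prod_ne_zero_iff.2 fun i _ => ?_)
    rw [← neg_add', neg_ne_zero, ← Nat.cast_add]
    exact Nat.cast_ne_zero.2 (by omega)
  have hrec (j : Fin (N + 1)) : ∀ᶠ n : ℕ in atTop,
      iteratedDeriv j f (n + 1 : ℕ) = iteratedDeriv j f n + b j / (n : 𝕜) ^ (m + j) := by
    filter_upwards [hf, hadd, eventually_ne_atTop 0] with n hfn haddn hn
    have hpow : (n : 𝕜) ^ m ≠ 0 := pow_ne_zero m (Nat.cast_ne_zero.2 hn)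
    rw [← iteratedDeriv_const_div_pow, Nat.cast_add_one]
    exact iteratedDeriv_add_const_eq_add (hfn.of_le (by exact_mod_cast j.is_le))
      (contDiffAt_const.div (contDiffAt_id.pow m) hpow) haddn
  have hrename : MvPolynomial.rename (finSuccEquiv (N + 1)) P ≠ 0 :=
    (map_ne_zero_iff _ (MvPolynomial.rename_injective _ (finSuccEquiv _).injective)).2 hP
  refine (frequently_eval_natCast_ne_zero_of_eventually_eq_add hb
    (e := fun j : Fin (N + 1) => m + j) (fun i j h => Fin.ext (by simpa using h)) (by omega)
    (y := fun j n => iteratedDeriv j f n) hrec hrename).mono fun n hn => ?_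
  rw [MvPolynomial.eval_rename] at hn
  convert hn using 3
  ext i
  cases i using Fin.cases <;> simp

theorem trigamma_diffTranscendental_general {k : ℕ} (hk : 1 < k) {H : ℂ → ℂ}
    (hH : ∀ z : ℂ, 0 < z.re → H z = ∑' n : ℕ, 1 / ((n : ℂ) + z) ^ k)
    {N : ℕ} {P : MvPolynomial (Fin (N + 2)) ℂ} (hP : P ≠ 0) :
    ∃ᶠ n : ℕ in atTop, MvPolynomial.eval
      (fun i : Fin (N + 2) =>
        if i.val = 0 then (n : ℂ) else iteratedDeriv (i.val - 1) H n) P ≠ 0 := by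
  have hre {z : ℂ} (hz : 0 < z.re) : ∀ᶠ w in 𝓝 z, 0 < w.re :=
    (Complex.continuous_re.tendsto z).eventually_const_lt hz
  have hanalytic {z : ℂ} (hz : 0 < z.re) : AnalyticAt ℂ H z :=
    (analyticAt_tsum_one_div_natCast_add_pow hk hz).congr <|
      (hre hz).mono fun w hw => (hH w hw).symm
  have hmap_add_one {z : ℂ} (hz : 0 < z.re) : H (z + 1) = H z + -1 / z ^ k := by
    rw [hH z hz, hH (z + 1) (by simpa using by positivity),
      tsum_one_div_natCast_add_add_one_pow hk hz, sub_eq_add_neg, neg_div]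
  have hcast : ∀ᶠ n : ℕ in atTop, 0 < (n : ℂ).re := by
    filter_upwards [eventually_gt_atTop 0] with n hn using by simpa using hn
  exact frequently_eval_iteratedDeriv_ne_zero_of_map_add_one (neg_ne_zero.2 one_ne_zero)
    (Nat.ne_zero_of_lt hk) (hcast.mono fun n hn => (hanalytic hn).contDiffAt)
    (hcast.mono fun n hn => (hre hn).mono fun z => hmap_add_one) hP

end DifferentialTranscendence

/-- The trigamma-type function `H₁`, meromorphic on `ℂ` and given by
`H₁ z = ∑_{n=0}^∞ 1/(n+z)²` for `z` not a nonpositive integer, is differentially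
transcendental: there are no `N ∈ ℕ` and nonzero polynomial `P ∈ ℂ[X₀, …, X_{N+1}]` with
`P (z, H₁ z, H₁' z, …, H₁⁽ᴺ⁾ z) = 0` at every `z` not a nonpositive integer. -/
theorem trigamma_diffTranscendental (H₁ : ℂ → ℂ)
    (hmero : MeromorphicOn H₁ Set.univ)
    (hdef : ∀ z : ℂ, (∀ k : ℕ, z ≠ -(k : ℂ)) →
      H₁ z = ∑' n : ℕ, 1 / ((n : ℂ) + z) ^ 2) :
    ¬ ∃ (N : ℕ) (P : MvPolynomial (Fin (N + 2)) ℂ),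
      P ≠ 0 ∧ ∀ z : ℂ, (∀ k : ℕ, z ≠ -(k : ℂ)) →
        MvPolynomial.eval
          (fun i : Fin (N + 2) =>
            if i.val = 0 then z else iteratedDeriv (i.val - 1) H₁ z) P = 0 := by
  rintro ⟨N, P, hP, hzero⟩
  obtain ⟨n, hne, hn⟩ := ((trigamma_diffTranscendental_general one_lt_two
    (fun z hz => hdef z (ne_neg_natCast_of_re_pos hz)) hP).and_eventually
      (Filter.eventually_gt_atTop 0)).exists
  exact hne (hzero n (ne_neg_natCast_of_re_pos (by simpa using hn)))
end
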